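/- Let G be an exceptional graph with root r that is not K_{2,3}, and let x, y be the two degree-2 vertices of G other than r. Then in G − y there exist (r, x)-paths of length congruent to 0 mod 3 and of length congruent to 2 mod 3, and symmetrically in G − x there exist (r, y)-paths of length 0 mod 3 and 2 mod 3. -/

import Mathlib

open SimpleGraph

/-- `ExcAux G r x y`: `G` is an exceptional graph with root `r`, whose two degree-2
vertices other than `r` are `x` and `y`.  Exceptional graphs are built recursively
from `K_{2,3}` (the root `r` being one of its three degree-2 vertices):
* if `x` and `y` are non-adjacent, one may add a new path of length 3 joining them;
* if `x` and `y` are adjacent, one may add a new vertex whose neighbourhood is that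
  of `x` (or of `y`), or a new 4-cycle `a b c d a` together with the edges `x a`
  and `c y`.
Newly added vertices are required to be fresh, i.e. isolated beforehand. -/
inductive ExcAux {V : Type*} : SimpleGraph V → V → V → V → Prop
  | base (r x y a b : V) (hd : ([r, x, y, a, b] : List V).Pairwise (· ≠ ·)) :
      ExcAux (SimpleGraph.fromEdgeSet
        {s(r, a), s(r, b), s(x, a), s(x, b), s(y, a), s(y, b)}) r x y
  | symm (G : SimpleGraph V) (r x y : V) : ExcAux G r x y → ExcAux G r y x
  | addPath (H : SimpleGraph V) (r x y p q : V) :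
      ExcAux H r x y → ¬ H.Adj x y → p ≠ q →
      H.neighborSet p = ∅ → H.neighborSet q = ∅ →
      ExcAux (H ⊔ SimpleGraph.fromEdgeSet {s(x, p), s(p, q), s(q, y)}) r p q
  | addTwin (H : SimpleGraph V) (r x y w a : V) :
      ExcAux H r x y → H.Adj x y → H.neighborSet x = {y, a} →
      H.neighborSet w = ∅ →
      ExcAux (H ⊔ SimpleGraph.fromEdgeSet {s(w, y), s(w, a)}) r x w
  | addSquare (H : SimpleGraph V) (r x y a b c d : V) :
      ExcAux H r x y → H.Adj x y →
      ([a, b, c, d] : List V).Pairwise (· ≠ ·) →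
      H.neighborSet a = ∅ → H.neighborSet b = ∅ →
      H.neighborSet c = ∅ → H.neighborSet d = ∅ →
      ExcAux (H ⊔ SimpleGraph.fromEdgeSet
        {s(a, b), s(b, c), s(c, d), s(d, a), s(x, a), s(c, y)}) r b d

/-- There is an `(r, x)`-path of length `k` mod 3 that avoids the set `S`. -/
def QPath {V : Type*} (G : SimpleGraph V) (r x : V) (S : Set V) (k : ℕ) : Prop :=
  ∃ p : G.Walk r x, p.IsPath ∧ (∀ v ∈ S, v ∉ p.support) ∧ p.length % 3 = k

lemma QPath.ext {V : Type*} {G : SimpleGraph V} {r x z : V} {S T : Set V} {k l : ℕ}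
    (h : QPath G r x S k) (hxz : G.Adj x z) (hz : z ∈ S) (hzT : z ∉ T) (hT : T ⊆ S)
    (hl : (k + 1) % 3 = l) : QPath G r z T l := by
  obtain ⟨p, hp, hS, hk⟩ := h
  refine ⟨p.concat hxz, hp.concat (hS z hz) hxz, ?_, ?_⟩
  · intro v hv
    rw [Walk.support_concat]
    simp only [List.mem_append, List.mem_singleton, not_or]
    exact ⟨hS v (hT hv), fun h => hzT (h ▸ hv)⟩
  · rw [Walk.length_concat]; omega

lemma QPath.mono {V : Type*} {G H : SimpleGraph V} {r x : V} {S T : Set V} {k : ℕ}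
    (h : QPath G r x S k) (hT : T ⊆ S) (hGH : G ≤ H) : QPath H r x T k := by
  obtain ⟨p, hp, hS, hk⟩ := h
  refine ⟨p.mapLe hGH, hp.mapLe hGH, ?_, ?_⟩
  · intro v hv
    simpa using hS v (hT hv)
  · simpa using hk

lemma notMem_support {V : Type*} {G : SimpleGraph V} {r x v : V} (p : G.Walk r x)
    (hr : G.neighborSet r ≠ ∅) (hv : G.neighborSet v = ∅) : v ∉ p.support := by
  induction p with
  | nil => 
    simp only [Walk.support_nil, List.mem_singleton]
    rintro rfl
    exact hr hv
  | cons h p ih =>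
    simp only [Walk.support_cons, List.mem_cons, not_or]
    refine ⟨?_, ih ?_⟩
    · rintro rfl; exact hr hv
    · intro h0
      have : _ ∈ G.neighborSet _ := h.symm
      rw [h0] at this
      exact this

lemma QPath.isol {V : Type*} {G : SimpleGraph V} {r x v : V} {S : Set V} {k : ℕ}
    (h : QPath G r x S k) (hr : G.neighborSet r ≠ ∅) (hv : G.neighborSet v = ∅) :
    QPath G r x (insert v S) k := by
  obtain ⟨p, hp, hS, hk⟩ := h
  refine ⟨p, hp, ?_, hk⟩
  rintro u (rfl | hu)
  · exact notMem_support p hr hv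
  · exact hS u hu

lemma QPath.drop {V : Type*} {G : SimpleGraph V} {r x y a : V} {S : Set V} {k l : ℕ}
    (h : QPath G r x S k) (hr : r ≠ x) (hx : G.neighborSet x = {y, a}) (hy : y ∈ S)
    (hl : (k + 2) % 3 = l) : QPath G r a (insert x S) l := by
  obtain ⟨p, hp, hS, hk⟩ := h
  obtain ⟨b, q, hb, rfl⟩ : ∃ (b : V) (q : G.Walk r b) (hb : G.Adj b x), p = q.concat hb := by
    cases p with
    | nil => exact absurd rfl hr
    | cons h p =>
      obtain ⟨b, q, hb, e⟩ := Walk.exists_cons_eq_concat h p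
      exact ⟨b, q, hb, e⟩
  have hbm : b ∈ G.neighborSet x := hb.symm
  have hby : b ≠ y := by
    rintro rfl
    refine hS _ hy ?_
    simp [Walk.support_concat]
  rw [hx] at hbm
  obtain rfl : b = a := by
    rcases hbm with h | h
    · exact absurd h hby
    · exact h
  rw [Walk.concat_isPath_iff] at hp
  refine ⟨q, hp.1, ?_, ?_⟩
  · rintro v (rfl | hv)
    · exact hp.2
    · intro h
      apply hS v hv
      simp [Walk.support_concat, h]
  · rw [Walk.length_concat] at hk; omega

lemma QPath.nil {V : Type*} (G : SimpleGraph V) (r : V) (S : Set V) (h : r ∉ S) :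
    QPath G r r S 0 :=
  ⟨Walk.nil, Walk.IsPath.nil, by intro v hv; simp; rintro rfl; exact h hv, rfl⟩

/-- The induction invariant. -/
def ExcInv {V : Type*} (G : SimpleGraph V) (r x y : V) : Prop :=
  G.neighborSet r ≠ ∅ ∧ r ≠ x ∧ r ≠ y ∧ x ≠ y ∧
  QPath G r x {y} 2 ∧ QPath G r y {x} 2 ∧
  (¬ G.Adj x y → QPath G r x ∅ 1 ∧ QPath G r y ∅ 1) ∧
  ((¬ G.Adj x y ∧ ∃ a b, G = SimpleGraph.fromEdgeSet
      {s(r, a), s(r, b), s(x, a), s(x, b), s(y, a), s(y, b)}) ∨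
    (QPath G r x {y} 0 ∧ QPath G r y {x} 0))

lemma nbr_mono {V : Type*} {G H : SimpleGraph V} {r : V} (h : G.neighborSet r ≠ ∅)
    (hGH : G ≤ H) : H.neighborSet r ≠ ∅ := by
  rw [← Set.nonempty_iff_ne_empty] at *
  obtain ⟨z, hz⟩ := h
  exact ⟨z, hGH hz⟩

lemma QPath.ne {V : Type*} {G : SimpleGraph V} {r x v : V} {S : Set V} {k : ℕ}
    (h : QPath G r x S k) (hr : G.neighborSet r ≠ ∅) (hv : G.neighborSet v = ∅) : x ≠ v := by
  obtain ⟨p, -⟩ := h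
  rintro rfl
  exact notMem_support p hr hv p.end_mem_support

lemma inv_base {V : Type*} (r x y a b : V) (hd : ([r, x, y, a, b] : List V).Pairwise (· ≠ ·)) :
    ExcInv (SimpleGraph.fromEdgeSet
        {s(r, a), s(r, b), s(x, a), s(x, b), s(y, a), s(y, b)}) r x y := by
  simp only [List.pairwise_cons, List.mem_cons, List.not_mem_nil, or_false, forall_eq_or_imp,
    forall_eq, IsEmpty.forall_iff, implies_true, List.Pairwise.nil, and_true] at hd
  obtain ⟨⟨hrx, hry, hra, hrb⟩, ⟨hxy, hxa, hxb⟩, ⟨hya, hyb⟩, hab⟩ := hd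
  set G := SimpleGraph.fromEdgeSet
        {s(r, a), s(r, b), s(x, a), s(x, b), s(y, a), s(y, b)} with hG
  have ra : G.Adj r a := by simp [hG, hra]
  have ax : G.Adj a x := by simp [hG, hxa.symm]
  have bx : G.Adj b x := by simp [hG, hxb.symm]
  have ay : G.Adj a y := by simp [hG, hya.symm]
  have yb : G.Adj y b := by simp [hG, hyb]
  have nxy : ¬ G.Adj x y := by
    simp [hG]; grind
  refine ⟨?_, hrx, hry, hxy, ?_, ?_, fun _ => ⟨?_, ?_⟩, Or.inl ⟨nxy, a, b, rfl⟩⟩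
  · rw [← Set.nonempty_iff_ne_empty]; exact ⟨a, ra⟩
  · refine ((QPath.nil G r {a, x, y} ?_).ext (T := {x, y}) (l := 1) ra ?_ ?_ ?_ rfl).ext
      ax ?_ ?_ ?_ rfl <;> grind
  · refine ((QPath.nil G r {a, x, y} ?_).ext (T := {x, y}) (l := 1) ra ?_ ?_ ?_ rfl).ext
      ay ?_ ?_ ?_ rfl <;> grind
  · refine ((((QPath.nil G r {a, x, y, b} ?_).ext (T := {x, y, b}) (l := 1) ra ?_ ?_ ?_ rfl).ext
      (T := {x, b}) (l := 2) ay ?_ ?_ ?_ rfl).ext (T := {x}) (l := 0) yb ?_ ?_ ?_ rfl).ext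
      bx ?_ ?_ ?_ rfl <;> grind
  · refine ((((QPath.nil G r {a, x, y, b} ?_).ext (T := {x, y, b}) (l := 1) ra ?_ ?_ ?_ rfl).ext
      (T := {y, b}) (l := 2) ax ?_ ?_ ?_ rfl).ext (T := {y}) (l := 0) bx.symm ?_ ?_ ?_ rfl).ext
      yb.symm ?_ ?_ ?_ rfl <;> grind

lemma inv_symm {V : Type*} (G : SimpleGraph V) (r x y : V) (h : ExcInv G r x y) : ExcInv G r y x := by
  obtain ⟨h1, h2, h3, h4, h5, h6, h7, h8⟩ := h
  refine ⟨h1, h3, h2, h4.symm, h6, h5, fun h => (h7 (fun h' => h h'.symm)).symm, ?_⟩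
  rcases h8 with ⟨h, a, b, e⟩ | h
  · refine Or.inl ⟨fun h' => h h'.symm, a, b, e.trans ?_⟩
    congr 1
    ext e
    simp only [Set.mem_insert_iff, Set.mem_singleton_iff]
    tauto
  · exact Or.inr h.symm

lemma inv_addPath {V : Type*} (H : SimpleGraph V) (r x y p q : V) (h : ExcInv H r x y)
    (hxy : ¬ H.Adj x y) (hpq : p ≠ q) (hp : H.neighborSet p = ∅) (hq : H.neighborSet q = ∅) :
    ExcInv (H ⊔ SimpleGraph.fromEdgeSet {s(x, p), s(p, q), s(q, y)}) r p q := by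
  obtain ⟨h1, h2, h3, h4, h5, h6, h7, h8⟩ := h
  obtain ⟨h9, h10⟩ := h7 hxy
  set G := H ⊔ SimpleGraph.fromEdgeSet {s(x, p), s(p, q), s(q, y)} with hG
  have le : H ≤ G := le_sup_left
  have xp : G.Adj x p := by simp [hG, h5.ne h1 hp]
  have yq : G.Adj y q := by simp [hG, h6.ne h1 hq]
  have apq : G.Adj p q := by simp [hG, hpq]
  refine ⟨nbr_mono h1 le, ?_, ?_, hpq, ?_, ?_, fun h => absurd apq h, Or.inr ⟨?_, ?_⟩⟩
  · rintro rfl; exact h1 hp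
  · rintro rfl; exact h1 hq
  · refine (((h9.isol h1 hp).isol h1 hq).mono subset_rfl le).ext xp ?_ ?_ ?_ rfl <;> grind
  · refine (((h10.isol h1 hp).isol h1 hq).mono subset_rfl le).ext yq ?_ ?_ ?_ rfl <;> grind
  · refine (((h5.isol h1 hp).isol h1 hq).mono subset_rfl le).ext xp ?_ ?_ ?_ rfl <;> grind
  · refine (((h6.isol h1 hp).isol h1 hq).mono subset_rfl le).ext yq ?_ ?_ ?_ rfl <;> grind

lemma inv_addTwin {V : Type*} (H : SimpleGraph V) (r x y w a : V) (h : ExcInv H r x y)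
    (hxy : H.Adj x y) (hx : H.neighborSet x = {y, a}) (hw : H.neighborSet w = ∅) :
    ExcInv (H ⊔ SimpleGraph.fromEdgeSet {s(w, y), s(w, a)}) r x w := by
  obtain ⟨h1, h2, h3, h4, h5, h6, h7, h8⟩ := h
  obtain ⟨h9, h10⟩ := h8.resolve_left (fun h => h.1 hxy)
  set G := H ⊔ SimpleGraph.fromEdgeSet {s(w, y), s(w, a)} with hG
  have le : H ≤ G := le_sup_left
  have k0 := h9.drop h2 hx rfl rfl
  have k2 := h5.drop h2 hx rfl rfl
  have yw : G.Adj y w := by simp [hG, h6.ne h1 hw]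
  have aw : G.Adj a w := by simp [hG, k0.ne h1 hw]
  have hxw := h5.ne h1 hw
  refine ⟨nbr_mono h1 le, h2, ?_, hxw, ?_, ?_, fun h => ⟨?_, ?_⟩, Or.inr ⟨?_, ?_⟩⟩
  · rintro rfl; exact h1 hw
  · refine (h5.isol h1 hw).mono ?_ le; grind
  · refine ((k2.isol h1 hw).mono subset_rfl le).ext aw ?_ ?_ ?_ rfl <;> grind
  · refine (h10.mono subset_rfl le).ext (le hxy.symm) ?_ ?_ ?_ rfl <;> grind
  · refine ((h10.isol h1 hw).mono subset_rfl le).ext yw ?_ ?_ ?_ rfl <;> grind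
  · refine (h9.isol h1 hw).mono ?_ le; grind
  · refine ((k0.isol h1 hw).mono subset_rfl le).ext aw ?_ ?_ ?_ rfl <;> grind

lemma inv_addSquare {V : Type*} (H : SimpleGraph V) (r x y a b c d : V) (h : ExcInv H r x y)
    (hxy : H.Adj x y) (hd : ([a, b, c, d] : List V).Pairwise (· ≠ ·))
    (ha : H.neighborSet a = ∅) (hb : H.neighborSet b = ∅)
    (hc : H.neighborSet c = ∅) (hd' : H.neighborSet d = ∅) :
    ExcInv (H ⊔ SimpleGraph.fromEdgeSet
        {s(a, b), s(b, c), s(c, d), s(d, a), s(x, a), s(c, y)}) r b d := by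
  obtain ⟨h1, h2, h3, h4, h5, h6, h7, h8⟩ := h
  obtain ⟨h9, h10⟩ := h8.resolve_left (fun h => h.1 hxy)
  simp only [List.pairwise_cons, List.mem_cons, List.not_mem_nil, or_false, forall_eq_or_imp,
    forall_eq, IsEmpty.forall_iff, implies_true, List.Pairwise.nil, and_true] at hd
  obtain ⟨⟨hab, hac, had⟩, ⟨hbc, hbd⟩, hcd⟩ := hd
  set G := H ⊔ SimpleGraph.fromEdgeSet
        {s(a, b), s(b, c), s(c, d), s(d, a), s(x, a), s(c, y)} with hG
  have le : H ≤ G := le_sup_left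
  have xa : G.Adj x a := by simp [hG, h5.ne h1 ha]
  have ab : G.Adj a b := by simp [hG, hab]
  have ad : G.Adj a d := by simp [hG, had]
  -- all needed paths from `r` to `a`
  have key : ∀ k, QPath H r x ∅ k → QPath G r a {b, d} ((k + 1) % 3) := by
    intro k hk
    refine ((((hk.isol h1 ha).isol h1 hb).isol h1 hd').mono subset_rfl le).ext xa ?_ ?_ ?_ rfl
      <;> grind
  have r0 : QPath H r x ∅ 0 := h9.mono (by simp) le_rfl
  have r2 : QPath H r x ∅ 2 := h5.mono (by simp) le_rfl
  have r1 : QPath H r x ∅ 1 := h10.ext hxy.symm rfl (by simp) (by simp) rfl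
  refine ⟨nbr_mono h1 le, ?_, ?_, hbd, ?_, ?_, fun h => ⟨?_, ?_⟩, Or.inr ⟨?_, ?_⟩⟩
  · rintro rfl; exact h1 hb
  · rintro rfl; exact h1 hd'
  · refine (key 0 r0).ext ab ?_ ?_ ?_ rfl <;> grind
  · refine (key 0 r0).ext ad ?_ ?_ ?_ rfl <;> grind
  · refine (key 2 r2).ext ab ?_ ?_ ?_ rfl <;> grind
  · refine (key 2 r2).ext ad ?_ ?_ ?_ rfl <;> grind
  · refine (key 1 r1).ext ab ?_ ?_ ?_ rfl <;> grind
  · refine (key 1 r1).ext ad ?_ ?_ ?_ rfl <;> grind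

lemma inv_of_exc {V : Type*} {G : SimpleGraph V} {r x y : V} (h : ExcAux G r x y) :
    ExcInv G r x y := by
  induction h with
  | base r x y a b hd => exact inv_base r x y a b hd
  | symm G r x y _ ih => exact inv_symm G r x y ih
  | addPath H r x y p q _ h1 h2 h3 h4 ih => exact inv_addPath H r x y p q ih h1 h2 h3 h4
  | addTwin H r x y w a _ h1 h2 h3 ih => exact inv_addTwin H r x y w a ih h1 h2 h3
  | addSquare H r x y a b c d _ h1 h2 h3 h4 h5 h6 ih =>
    exact inv_addSquare H r x y a b c d ih h1 h2 h3 h4 h5 h6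

/-- Let `G` be an exceptional graph with root `r` and further degree-2 vertices `x, y`,
and suppose `G` is not `K_{2,3}` itself.  Then `G - y` contains `(r, x)`-paths of
lengths `≡ 0` and `≡ 2 (mod 3)`, and `G - x` contains `(r, y)`-paths of lengths
`≡ 0` and `≡ 2 (mod 3)`. -/
theorem stmt_8 {V : Type*} (G : SimpleGraph V) (r x y : V)
    (hG : ExcAux G r x y)
    (hnotK23 : ∀ a b : V, G ≠ SimpleGraph.fromEdgeSet
      {s(r, a), s(r, b), s(x, a), s(x, b), s(y, a), s(y, b)}) :
    (∃ p : G.Walk r x, p.IsPath ∧ y ∉ p.support ∧ p.length % 3 = 0) ∧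
    (∃ p : G.Walk r x, p.IsPath ∧ y ∉ p.support ∧ p.length % 3 = 2) ∧
    (∃ p : G.Walk r y, p.IsPath ∧ x ∉ p.support ∧ p.length % 3 = 0) ∧
    (∃ p : G.Walk r y, p.IsPath ∧ x ∉ p.support ∧ p.length % 3 = 2) := by
  obtain ⟨h1, h2, h3, h4, h5, h6, h7, h8⟩ := inv_of_exc hG
  obtain ⟨h9, h10⟩ := h8.resolve_left (fun ⟨_, a, b, e⟩ => hnotK23 a b e)
  have cv : ∀ {u v k}, QPath G r u {v} k →
      ∃ p : G.Walk r u, p.IsPath ∧ v ∉ p.support ∧ p.length % 3 = k :=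
    fun ⟨p, hp, hS, hk⟩ => ⟨p, hp, hS _ rfl, hk⟩
  exact ⟨cv h9, cv h5, cv h10, cv h6⟩
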